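/- Suppose ‖T_i‖ < 1/2 for all 1 ≤ i ≤ m and Σ_{i=1}^m α_d(T_i)^d |det(T_i)| > 1. Then for Lebesgue-almost every a = (a_1,…,a_m) ∈ ℝ^{md}, the self-affine set K^a has non-empty interior. -/

import Mathlib

open MeasureTheory

noncomputable section

namespace SelfAffine

variable {d m : ℕ}

/-- Euclidean operator norm of a `d × d` real matrix. -/
def opNorm (A : Matrix (Fin d) (Fin d) ℝ) : ℝ :=
  ‖Matrix.toEuclideanCLM (𝕜 := ℝ) A‖

/-- smallest singular value of an invertible matrix, via `α_d(A) = ‖A⁻¹‖⁻¹`. -/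
def alphaMin (A : Matrix (Fin d) (Fin d) ℝ) : ℝ := (opNorm A⁻¹)⁻¹

/-- `T_I = T_{i_1} ⋯ T_{i_n}` for a finite word `I ∈ Σ_n`. -/
def wordProd (T : Fin m → Matrix (Fin d) (Fin d) ℝ) {n : ℕ} (I : Fin n → Fin m) :
    Matrix (Fin d) (Fin d) ℝ :=
  (List.ofFn fun k => T (I k)).prod

/-- the coding map `π^a : Σ → ℝ^d`, `π^a(x) = ∑_{n ≥ 0} T_{x|n} a_{x_{n+1}}`. -/
def codingMap (T : Fin m → Matrix (Fin d) (Fin d) ℝ)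
    (a : Fin m → EuclideanSpace ℝ (Fin d)) (x : ℕ → Fin m) : EuclideanSpace ℝ (Fin d) :=
  ∑' n : ℕ, Matrix.toEuclideanCLM (𝕜 := ℝ) (wordProd T fun k : Fin n => x (k : ℕ)) (a (x n))

/-- the self-affine set `K^a = π^a(Σ)`. -/
def attractor (T : Fin m → Matrix (Fin d) (Fin d) ℝ)
    (a : Fin m → EuclideanSpace ℝ (Fin d)) : Set (EuclideanSpace ℝ (Fin d)) :=
  Set.range (codingMap T a)

/-!
Draw the translations `a` from a Gaussian distribution and let `ν_a` be the image under `π^a` of the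
Bernoulli measure with weights `p`. If `F_x` denotes the linear operator `a ↦ π^a(x)`, then
`𝔼 |charFun ν_a ξ|²` is the average `Φ ξ` of `exp (-‖(F_x - F_y)† ξ‖² / 2)` over independent words
`x` and `y`. Since `‖T_i‖ < 1/2`, pairs with distinct first letters contribute at most
`exp (-c ‖ξ‖²)`, while pairs with the same first letter renormalise, so that
`Φ ξ ≤ exp (-c ‖ξ‖²) + ∑ i, p_i² Φ (T_i† ξ)`. For `p_i` proportional to `α_d(T_i)^d |det T_i|` and
some `s > d`, the operator `Φ ↦ ∑ i, p_i² Φ ∘ T_i†` contracts `L¹((1 + ‖ξ‖)^s dξ)`, and iterating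
the inequality shows that `Φ` is integrable there. By Cauchy–Schwarz `charFun ν_a` is then almost
surely integrable: `ν_a` has a continuous density, and its support `K^a` has non-empty interior.
-/

section FourierTransform

open scoped FourierTransform SchwartzMap ContDiff

variable {E : Type*} [NormedAddCommGroup E] [InnerProductSpace ℝ E] [MeasurableSpace E]

theorem fourierIntegral_one_eq_charFun (ν : Measure E) (t : E) :
    VectorFourier.fourierIntegral Real.fourierChar ν (innerₗ E) 1 t
      = charFun ν (-(2 * Real.pi) • t) := by
  rw [charFun_eq_fourierIntegral', smul_smul, neg_mul_neg,
    inv_mul_cancel₀ (by positivity), one_smul]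

variable [FiniteDimensional ℝ E] [BorelSpace E]

theorem integral_fourier_eq_integral_mul_charFun (ν : Measure E) [IsFiniteMeasure ν]
    {ψ : E → ℂ} (hψ : Integrable ψ) :
    ∫ x, 𝓕 ψ x ∂ν = ∫ t, ψ t * charFun ν (-(2 * Real.pi) • t) := by
  have h := VectorFourier.integral_fourierIntegral_smul_eq_flip (μ := volume) (ν := ν)
    (L := innerₗ E) (g := (1 : E → ℂ)) Real.continuous_fourierChar continuous_inner hψ
    (integrable_const _)
  simpa [fourierIntegral_one_eq_charFun, flip_innerₗ] using! h

theorem integral_fourierInv_mul_eq {f g : E → ℂ} (hf : Integrable f) (hg : Integrable g) :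
    ∫ x, 𝓕⁻ f x * g x = ∫ x, f x * 𝓕⁻ g x := by
  have hflip : (-innerₗ E).flip = -innerₗ E := by ext; simp [real_inner_comm]
  have h := VectorFourier.integral_fourierIntegral_smul_eq_flip (μ := volume) (ν := volume)
    (L := -innerₗ E) Real.continuous_fourierChar continuous_inner.neg hf hg
  rw [hflip] at h
  exact h

theorem continuous_fourierInv_of_integrable {f : E → ℂ} (hf : Integrable f) :
    Continuous (𝓕⁻ f) :=
  VectorFourier.fourierIntegral_continuous Real.continuous_fourierChar
    (L := -innerₗ E) continuous_inner.neg hf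

/-- The inverse Fourier transform of a measure, normalised so that it is the continuous density of
`ν` whenever `charFun ν` is integrable. -/
def fourierDensity (ν : Measure E) : E → ℂ :=
  𝓕⁻ fun t => charFun ν (-(2 * Real.pi) • t)

section IntegrableCharFun

variable {ν : Measure E}

theorem integrable_charFun_smul (hν : Integrable (charFun ν)) :
    Integrable fun t => charFun ν (-(2 * Real.pi) • t) :=
  hν.comp_smul (by simp [Real.pi_ne_zero])

theorem continuous_fourierDensity (hν : Integrable (charFun ν)) :
    Continuous (fourierDensity ν) :=
  continuous_fourierInv_of_integrable (integrable_charFun_smul hν)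

theorem integral_schwartzMap_eq_integral_mul_fourierDensity [IsFiniteMeasure ν]
    (hν : Integrable (charFun ν)) (φ : 𝓢(E, ℂ)) :
    ∫ x, φ x ∂ν = ∫ x, φ x * fourierDensity ν x := by
  have hinv : 𝓕 (𝓕⁻ (φ : E → ℂ)) = φ := by
    rw [← SchwartzMap.fourierInv_coe, ← SchwartzMap.fourier_coe,
      FourierTransform.fourier_fourierInv_eq]
  have hint : Integrable (𝓕⁻ (φ : E → ℂ)) := by
    rw [← SchwartzMap.fourierInv_coe]
    exact (𝓕⁻ φ : 𝓢(E, ℂ)).integrable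
  rw [fourierDensity, ← integral_fourierInv_mul_eq φ.integrable (integrable_charFun_smul hν),
    ← integral_fourier_eq_integral_mul_charFun ν hint, hinv]

theorem integral_smul_fourierDensity_of_contDiff [IsFiniteMeasure ν]
    (hν : Integrable (charFun ν)) {f : E → ℝ} (hf : ContDiff ℝ ∞ f) (hfc : HasCompactSupport f) :
    ∫ x, f x • fourierDensity ν x = ∫ x, (f x : ℂ) ∂ν := by
  have hsupp : HasCompactSupport fun x => (f x : ℂ) :=
    hfc.comp_left Complex.ofReal_zero
  exact (integral_schwartzMap_eq_integral_mul_fourierDensity hν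
    (hsupp.toSchwartzMap (Complex.ofRealCLM.contDiff.comp hf))).symm

theorem fourierDensity_eqOn_zero_of_ae_notMem [IsFiniteMeasure ν] (hν : Integrable (charFun ν))
    {U : Set E} (hU : IsOpen U) (hνU : ∀ᵐ x ∂ν, x ∉ U) : Set.EqOn (fourierDensity ν) 0 U := by
  have hcont := continuous_fourierDensity hν
  have hae : ∀ᵐ x, x ∈ U → fourierDensity ν x = 0 := by
    refine hU.ae_eq_zero_of_integral_contDiff_smul_eq_zero
      (hcont.locallyIntegrable.locallyIntegrableOn _) fun f hf hfc hfU => ?_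
    rw [integral_smul_fourierDensity_of_contDiff hν hf hfc]
    refine integral_eq_zero_of_ae ?_
    filter_upwards [hνU] with x hx
    exact Complex.ofReal_eq_zero.2 (image_eq_zero_of_notMem_tsupport fun h => hx (hfU h))
  exact Measure.eqOn_open_of_ae_eq ((ae_restrict_iff' hU.measurableSet).2 hae) hU
    hcont.continuousOn continuousOn_const

theorem fourierDensity_ne_zero [IsFiniteMeasure ν] [NeZero ν] (hν : Integrable (charFun ν)) :
    fourierDensity ν ≠ 0 := by
  intro hzero
  have hfourier : 𝓕 (fun t => charFun ν (-(2 * Real.pi) • t)) = 0 := by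
    funext w
    rw [← neg_neg w, ← Real.fourierInv_eq_fourier_neg]
    exact congrFun hzero (-w)
  have hinv := (show Continuous fun t => charFun ν (-(2 * Real.pi) • t) by
    fun_prop).fourierInv_fourier_eq (integrable_charFun_smul hν)
      (hfourier ▸ integrable_zero _ _ _)
  rw [hfourier] at hinv
  have hmass : (0 : ℂ) = ν.real Set.univ := by
    simpa [Real.fourierInv_eq] using congrFun hinv 0
  exact measureReal_univ_ne_zero (Complex.ofReal_eq_zero.1 hmass.symm)

theorem interior_nonempty_of_integrable_charFun [IsFiniteMeasure ν] [NeZero ν]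
    (hν : Integrable (charFun ν)) {K : Set E} (hK : IsClosed K) (hνK : ∀ᵐ x ∂ν, x ∈ K) :
    (interior K).Nonempty := by
  by_contra! hempty
  have hvanish : Set.EqOn (fourierDensity ν) 0 Kᶜ :=
    fourierDensity_eqOn_zero_of_ae_notMem hν hK.isOpen_compl (by simpa using hνK)
  exact fourierDensity_ne_zero hν (Continuous.ext_on
    (interior_eq_empty_iff_dense_compl.1 hempty) (continuous_fourierDensity hν)
    continuous_const hvanish)

end IntegrableCharFun

end FourierTransform

section InvertibleOperator

open ContinuousLinearMap

theorem one_le_norm_inverse {R : Type*} [NormedRing R] [NormOneClass R] {a : R} (ha : IsUnit a)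
    (ha1 : ‖a‖ ≤ 1) : 1 ≤ ‖Ring.inverse a‖ := by
  calc 1 = ‖a * Ring.inverse a‖ := by rw [Ring.mul_inverse_cancel _ ha, norm_one]
    _ ≤ ‖a‖ * ‖Ring.inverse a‖ := norm_mul_le _ _
    _ ≤ ‖Ring.inverse a‖ := mul_le_of_le_one_left (norm_nonneg _) ha1

variable {E : Type*} [NormedAddCommGroup E] [InnerProductSpace ℝ E] {A : E →L[ℝ] E}

theorem norm_le_norm_inverse_mul_norm_adjoint_apply [CompleteSpace E] (hA : IsUnit A) (ξ : E) :
    ‖ξ‖ ≤ ‖Ring.inverse A‖ * ‖adjoint A ξ‖ := by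
  have hcancel : adjoint (Ring.inverse A) (adjoint A ξ) = ξ := by
    have h : star (Ring.inverse A) * star A = 1 := by
      rw [← star_mul, Ring.mul_inverse_cancel _ hA, star_one]
    exact DFunLike.congr_fun h ξ
  calc ‖ξ‖ = ‖adjoint (Ring.inverse A) (adjoint A ξ)‖ := by rw [hcancel]
    _ ≤ ‖adjoint (Ring.inverse A)‖ * ‖adjoint A ξ‖ := le_opNorm _ _
    _ = ‖Ring.inverse A‖ * ‖adjoint A ξ‖ := by rw [LinearIsometryEquiv.norm_map]

theorem det_adjoint [FiniteDimensional ℝ E] (A : E →L[ℝ] E) :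
    LinearMap.det (adjoint A : E →ₗ[ℝ] E) = LinearMap.det (A : E →ₗ[ℝ] E) := by
  let b := stdOrthonormalBasis ℝ E
  have h : (adjoint A : E →ₗ[ℝ] E) = LinearMap.adjoint (A : E →ₗ[ℝ] E) := rfl
  rw [h, ← LinearMap.det_toMatrix b.toBasis, LinearMap.toMatrix_adjoint,
    Matrix.det_conjTranspose, LinearMap.det_toMatrix, star_trivial]

end InvertibleOperator

section SobolevMeasure

variable {E : Type*} [NormedAddCommGroup E] [InnerProductSpace ℝ E] [FiniteDimensional ℝ E]
  [MeasurableSpace E] [BorelSpace E]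

theorem integrable_exp_neg_mul_sq_norm {b : ℝ} (hb : 0 < b) :
    Integrable fun v : E => Real.exp (-b * ‖v‖ ^ 2) :=
  .of_integral_ne_zero <| by
    rw [GaussianFourier.integral_rexp_neg_mul_sq_norm hb]
    positivity

variable (E) in
/-- The measure on `E` with density `(1 + ‖ξ‖) ^ s`: a function lies in the Sobolev space
`H^{s / 2}` iff its Fourier transform is square integrable for this measure. -/
def sobolevMeasure (s : ℝ) : Measure E :=
  volume.withDensity fun ξ => ENNReal.ofReal ((1 + ‖ξ‖) ^ s)

instance (s : ℝ) : SFinite (sobolevMeasure E s) := by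
  unfold sobolevMeasure
  infer_instance

theorem lintegral_sobolevMeasure (s : ℝ) (f : E → ENNReal) :
    ∫⁻ ξ, f ξ ∂sobolevMeasure E s = ∫⁻ ξ, ENNReal.ofReal ((1 + ‖ξ‖) ^ s) * f ξ :=
  lintegral_withDensity_eq_lintegral_mul_non_measurable _ (by fun_prop)
    (.of_forall fun _ => ENNReal.ofReal_lt_top) f

theorem lintegral_exp_neg_mul_sq_norm_sobolevMeasure_lt_top {s c : ℝ} (hs : 0 ≤ s) (hc : 0 < c) :
    ∫⁻ ξ, ENNReal.ofReal (Real.exp (-c * ‖ξ‖ ^ 2)) ∂sobolevMeasure E s < ⊤ := by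
  have hint : Integrable fun ξ : E =>
      Real.exp (s ^ 2 / (2 * c)) * Real.exp (-(c / 2) * ‖ξ‖ ^ 2) :=
    (integrable_exp_neg_mul_sq_norm (half_pos hc)).const_mul _
  have hpow (ξ : E) : (1 + ‖ξ‖) ^ s ≤ Real.exp (s * ‖ξ‖) := by
    rw [mul_comm, Real.exp_mul, add_comm]
    exact Real.rpow_le_rpow (by positivity) (Real.add_one_le_exp _) hs
  have hsq (ξ : E) : s * ‖ξ‖ + -c * ‖ξ‖ ^ 2 ≤ s ^ 2 / (2 * c) + -(c / 2) * ‖ξ‖ ^ 2 := by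
    have heq : (s - c * ‖ξ‖) ^ 2 / (2 * c) = s ^ 2 / (2 * c) - s * ‖ξ‖ + c / 2 * ‖ξ‖ ^ 2 := by
      field_simp
      ring
    have hnonneg : 0 ≤ (s - c * ‖ξ‖) ^ 2 / (2 * c) := by positivity
    linarith
  refine (lintegral_sobolevMeasure s _).trans_lt
    (lt_of_le_of_lt (lintegral_mono fun ξ => ?_) hint.lintegral_lt_top)
  rw [← ENNReal.ofReal_mul (by positivity)]
  refine ENNReal.ofReal_le_ofReal ?_
  calc (1 + ‖ξ‖) ^ s * Real.exp (-c * ‖ξ‖ ^ 2)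
      ≤ Real.exp (s * ‖ξ‖) * Real.exp (-c * ‖ξ‖ ^ 2) := by gcongr; exact hpow ξ
    _ ≤ Real.exp (s ^ 2 / (2 * c)) * Real.exp (-(c / 2) * ‖ξ‖ ^ 2) := by
      rw [← Real.exp_add, ← Real.exp_add]
      exact Real.exp_le_exp.2 (hsq ξ)

theorem map_sobolevMeasure_le {s B : ℝ} (hs : 0 ≤ s) {A : E →L[ℝ] E}
    (hdet : LinearMap.det (A : E →ₗ[ℝ] E) ≠ 0) (hB : 1 ≤ B) (hA : ∀ ξ, ‖ξ‖ ≤ B * ‖A ξ‖) :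
    (sobolevMeasure E s).map A ≤
      ENNReal.ofReal (B ^ s * |LinearMap.det (A : E →ₗ[ℝ] E)|⁻¹) • sobolevMeasure E s := by
  have hmap : volume.map A = ENNReal.ofReal |LinearMap.det (A : E →ₗ[ℝ] E)|⁻¹ • volume := by
    rw [← abs_inv]
    exact Measure.map_linearMap_addHaar_eq_smul_addHaar volume hdet
  have hweight (ξ : E) : (1 + ‖ξ‖) ^ s ≤ B ^ s * (1 + ‖A ξ‖) ^ s := by
    rw [← Real.mul_rpow (by positivity) (by positivity)]
    refine Real.rpow_le_rpow (by positivity) ?_ hs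
    linarith [hA ξ]
  refine Measure.le_iff.2 fun S hS => ?_
  rw [Measure.map_apply A.measurable hS, sobolevMeasure,
    withDensity_apply _ (A.measurable hS), Measure.smul_apply, withDensity_apply _ hS, smul_eq_mul]
  calc ∫⁻ ξ in A ⁻¹' S, ENNReal.ofReal ((1 + ‖ξ‖) ^ s)
      ≤ ∫⁻ ξ in A ⁻¹' S, ENNReal.ofReal (B ^ s) * ENNReal.ofReal ((1 + ‖A ξ‖) ^ s) := by
        refine lintegral_mono fun ξ => ?_
        rw [← ENNReal.ofReal_mul (by positivity)]
        exact ENNReal.ofReal_le_ofReal (hweight ξ)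
    _ = ENNReal.ofReal (B ^ s) * ∫⁻ ξ in S, ENNReal.ofReal ((1 + ‖ξ‖) ^ s) ∂volume.map A := by
        rw [lintegral_const_mul' _ _ ENNReal.ofReal_ne_top,
          setLIntegral_map hS (by fun_prop) A.measurable]
    _ = _ := by
        rw [hmap, Measure.restrict_smul, lintegral_smul_measure, smul_eq_mul,
          ENNReal.ofReal_mul (by positivity), mul_assoc]

theorem map_adjoint_sobolevMeasure_le [Nontrivial E] {s : ℝ} (hs : 0 ≤ s) {A : E →L[ℝ] E}
    (hA : IsUnit A) (hA1 : ‖A‖ ≤ 1) :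
    (sobolevMeasure E s).map (ContinuousLinearMap.adjoint A) ≤
      ENNReal.ofReal (‖Ring.inverse A‖ ^ s * |LinearMap.det (A : E →ₗ[ℝ] E)|⁻¹)
        • sobolevMeasure E s := by
  have hdet : LinearMap.det (A : E →ₗ[ℝ] E) ≠ 0 :=
    ((hA.map ContinuousLinearMap.toLinearMapRingHom).map LinearMap.det).ne_zero
  rw [← det_adjoint] at hdet ⊢
  exact map_sobolevMeasure_le hs hdet (one_le_norm_inverse hA hA1)
    (norm_le_norm_inverse_mul_norm_adjoint_apply hA)

theorem integrable_of_lintegral_sq_sobolevMeasure_lt_top {s : ℝ} (hs : Module.finrank ℝ E < s)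
    {f : E → ℂ} (hf : AEStronglyMeasurable f)
    (hfin : ∫⁻ ξ, ‖f ξ‖ₑ ^ 2 ∂sobolevMeasure E s < ⊤) : Integrable f := by
  have hamgm (t w : ENNReal) : t ≤ w * t ^ 2 + w⁻¹ := by
    rcases le_total 1 (w * t) with h | h
    · calc t = 1 * t := (one_mul t).symm
        _ ≤ w * t * t := by gcongr
        _ = w * t ^ 2 := by ring
        _ ≤ w * t ^ 2 + w⁻¹ := le_self_add
    · exact le_add_left (by rwa [ENNReal.le_inv_iff_mul_le, mul_comm])
  have hweight : ∫⁻ ξ : E, (ENNReal.ofReal ((1 + ‖ξ‖) ^ s))⁻¹ < ⊤ := by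
    convert (integrable_one_add_norm (μ := volume) hs).lintegral_lt_top using 3 with ξ
    rw [← ENNReal.ofReal_inv_of_pos (by positivity), Real.rpow_neg (by positivity)]
  refine ⟨hf, ?_⟩
  calc ∫⁻ ξ, ‖f ξ‖ₑ
      ≤ ∫⁻ ξ, ENNReal.ofReal ((1 + ‖ξ‖) ^ s) * ‖f ξ‖ₑ ^ 2
          + (ENNReal.ofReal ((1 + ‖ξ‖) ^ s))⁻¹ := by
        exact lintegral_mono fun ξ => hamgm _ _
    _ < ⊤ := by
        rw [lintegral_add_right _ (by fun_prop), ← lintegral_sobolevMeasure]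
        exact ENNReal.add_lt_top.2 ⟨hfin, hweight⟩

end SobolevMeasure

section RandomLinearImage

open ProbabilityTheory ContinuousLinearMap

variable {E V : Type*} [NormedAddCommGroup E] [InnerProductSpace ℝ E]
  [NormedAddCommGroup V] [InnerProductSpace ℝ V]

theorem integral_charFun_comm [SecondCountableTopology V] [MeasurableSpace V] [BorelSpace V]
    (μ ν : Measure V) [IsFiniteMeasure μ] [IsFiniteMeasure ν] :
    ∫ v, charFun μ v ∂ν = ∫ v, charFun ν v ∂μ := by
  have hint : Integrable (fun p : V × V => Complex.exp ((inner ℝ p.2 p.1 : ℝ) * Complex.I))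
      (ν.prod μ) :=
    .of_bound (by fun_prop) 1 (.of_forall fun p => (Complex.norm_exp_ofReal_mul_I _).le)
  simp only [charFun_apply]
  rw [integral_integral_swap hint]
  simp only [real_inner_comm]

variable {X : Type*} [MeasurableSpace X] {F : X → V →L[ℝ] E}

theorem charFun_map_clm_apply [MeasurableSpace E] [BorelSpace E] (hF : Measurable F)
    (μ : Measure X) (a : V) (ξ : E) :
    charFun (μ.map fun x => F x a) ξ
      = ∫ x, Complex.exp ((inner ℝ (F x a) ξ : ℝ) * Complex.I) ∂μ := by
  rw [charFun_apply, integral_map (hF.apply_continuousLinearMap a).aemeasurable (by fun_prop)]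

variable [FiniteDimensional ℝ V] [MeasurableSpace V] [BorelSpace V]

theorem charFun_withDensity_exp_neg_sq_norm_div_two (t : V) :
    charFun (volume.withDensity fun v : V => ENNReal.ofReal (Real.exp (-‖v‖ ^ 2 / 2))) t
      = ((2 * Real.pi) ^ (Module.finrank ℝ V / 2 : ℝ) : ℝ) * Complex.exp (-‖t‖ ^ 2 / 2) := by
  rw [charFun_apply, integral_withDensity_eq_integral_toReal_smul (by fun_prop) (by simp)]
  have h := GaussianFourier.integral_cexp_neg_mul_sq_norm_add (b := 1 / 2) (by simp) Complex.I t
  convert! h using 1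
  · congr 1
    ext v
    rw [ENNReal.toReal_ofReal (Real.exp_pos _).le, Complex.real_smul, Complex.ofReal_exp,
      ← Complex.exp_add, real_inner_comm]
    push_cast
    ring_nf
  · rw [Complex.ofReal_cpow (by positivity), Complex.I_sq]
    push_cast
    ring_nf

variable (V) in
theorem volume_absolutelyContinuous_stdGaussian : volume ≪ stdGaussian V := by
  set γ : Measure V := volume.withDensity fun v => ENNReal.ofReal (Real.exp (-‖v‖ ^ 2 / 2))
  set c : ℝ := (2 * Real.pi) ^ (Module.finrank ℝ V / 2 : ℝ)
  have hγfin : IsFiniteMeasure γ := isFiniteMeasure_withDensity_ofReal <|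
    ((integrable_exp_neg_mul_sq_norm (E := V) (half_pos one_pos)).congr
      (.of_forall fun v => by ring_nf)).2
  have hγc : γ = ENNReal.ofReal c • stdGaussian V := by
    have : IsFiniteMeasure (ENNReal.ofReal c • stdGaussian V) :=
      Measure.smul_finite _ ENNReal.ofReal_ne_top
    refine Measure.ext_of_charFun (funext fun t => ?_)
    rw [charFun_withDensity_exp_neg_sq_norm_div_two, ← charFun_stdGaussian, charFun_apply,
      charFun_apply, integral_smul_measure, ENNReal.toReal_ofReal (by positivity),
      Complex.real_smul]
  have hvolume : volume ≪ γ :=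
    withDensity_absolutelyContinuous' (by fun_prop) (.of_forall fun v => by simp [Real.exp_pos])
  exact (hγc ▸ hvolume).trans Measure.smul_absolutelyContinuous

theorem measurable_adjoint_sub_apply [FiniteDimensional ℝ E] (hF : Measurable F) (ξ : E) :
    Measurable fun z : X × X => adjoint (F z.1 - F z.2) ξ :=
  ((adjoint (𝕜 := ℝ) (E := V) (F := E)).continuous.measurable.comp
    ((hF.comp measurable_fst).sub (hF.comp measurable_snd))).apply_continuousLinearMap ξ

variable [MeasurableSpace E] [BorelSpace E]

/-- The mean square, over a standard Gaussian parameter `a`, of the characteristic function of the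
image of `μ` under `x ↦ F x a`. -/
def meanSqCharFun (μ : Measure X) (F : X → V →L[ℝ] E) (ξ : E) : ENNReal :=
  ∫⁻ a, ‖charFun (μ.map fun x => F x a) ξ‖ₑ ^ 2 ∂stdGaussian V

theorem meanSqCharFun_le_one (hF : Measurable F) (μ : Measure X) [IsProbabilityMeasure μ] (ξ : E) :
    meanSqCharFun μ F ξ ≤ 1 := by
  rw [← measure_univ (μ := stdGaussian V), ← lintegral_one, meanSqCharFun]
  have (a : V) := Measure.isProbabilityMeasure_map (μ := μ)
    (hF.apply_continuousLinearMap a).aemeasurable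
  refine lintegral_mono fun a => pow_le_one₀ zero_le ?_
  exact enorm_le_coe.2 (norm_charFun_le_one (μ := μ.map fun x => F x a) ξ)

variable [FiniteDimensional ℝ E]

theorem sq_norm_charFun_map_clm_apply (hF : Measurable F) (μ : Measure X) [IsFiniteMeasure μ]
    (a : V) (ξ : E) :
    ((‖charFun (μ.map fun x => F x a) ξ‖ ^ 2 : ℝ) : ℂ)
      = charFun ((μ.prod μ).map fun z => adjoint (F z.1 - F z.2) ξ) a := by
  have hmeas := (measurable_adjoint_sub_apply hF ξ).aemeasurable (μ := μ.prod μ)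
  rw [charFun_apply (μ := Measure.map _ (μ.prod μ)), integral_map hmeas (by fun_prop),
    Complex.ofReal_pow, ← Complex.mul_conj', charFun_map_clm_apply hF, ← integral_conj,
    ← integral_prod_mul]
  refine integral_congr_ae (.of_forall fun z => ?_)
  simp only [adjoint_inner_left]
  rw [← Complex.exp_conj, ← Complex.exp_add]
  simp only [real_inner_comm, map_mul, Complex.conj_ofReal, Complex.conj_I, mul_neg, sub_apply,
    inner_sub_right, Complex.ofReal_sub]
  ring_nf

theorem measurable_charFun_map_clm_apply (hF : Measurable F) (μ : Measure X) [SFinite μ] :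
    Measurable fun p : V × E => charFun (μ.map fun x => F x p.1) p.2 := by
  have happly : Measurable fun q : (V × E) × X => F q.2 q.1.1 :=
    isBoundedBilinearMap_apply.continuous.measurable.comp
      ((hF.comp measurable_snd).prodMk (measurable_fst.comp measurable_fst))
  have hexp : Measurable fun q : (V × E) × X =>
      Complex.exp ((inner ℝ (F q.2 q.1.1) q.1.2 : ℝ) * Complex.I) :=
    ((Complex.measurable_ofReal.comp (happly.inner
      (measurable_snd.comp measurable_fst))).mul_const _).cexp
  simp only [charFun_map_clm_apply hF]
  exact hexp.stronglyMeasurable.integral_prod_right.measurable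

theorem integral_sq_norm_charFun_map_clm_apply (hF : Measurable F) (μ : Measure X)
    [IsFiniteMeasure μ] (ξ : E) :
    ∫ a, ‖charFun (μ.map fun x => F x a) ξ‖ ^ 2 ∂stdGaussian V
      = ∫ z, Real.exp (-‖adjoint (F z.1 - F z.2) ξ‖ ^ 2 / 2) ∂μ.prod μ := by
  have hmeas := measurable_adjoint_sub_apply hF ξ
  have hgauss (v : V) : charFun (stdGaussian V) v = (Real.exp (-‖v‖ ^ 2 / 2) : ℝ) := by
    rw [charFun_stdGaussian]
    push_cast
    rfl
  apply Complex.ofReal_injective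
  rw [← integral_complex_ofReal, ← integral_complex_ofReal]
  simp only [sq_norm_charFun_map_clm_apply hF]
  rw [integral_charFun_comm, integral_map hmeas.aemeasurable (by fun_prop)]
  simp only [hgauss]

theorem meanSqCharFun_eq_lintegral (hF : Measurable F) (μ : Measure X) [IsFiniteMeasure μ] (ξ : E) :
    meanSqCharFun μ F ξ
      = ∫⁻ z, ENNReal.ofReal (Real.exp (-‖adjoint (F z.1 - F z.2) ξ‖ ^ 2 / 2)) ∂μ.prod μ := by
  have hadj := measurable_adjoint_sub_apply hF ξ
  have hchar : Measurable fun a => charFun (μ.map fun x => F x a) ξ :=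
    (measurable_charFun_map_clm_apply hF μ).comp measurable_prodMk_right
  have hint_char :
      Integrable (fun a => ‖charFun (μ.map fun x => F x a) ξ‖ ^ 2) (stdGaussian V) := by
    refine .of_bound (hchar.norm.pow_const 2).aestronglyMeasurable (μ.real Set.univ ^ 2)
      (.of_forall fun a => ?_)
    rw [norm_pow, norm_norm]
    refine pow_le_pow_left₀ (norm_nonneg _) ((norm_charFun_le ξ).trans_eq ?_) 2
    exact map_measureReal_apply (hF.apply_continuousLinearMap a) .univ
  have hint_exp :
      Integrable (fun z => Real.exp (-‖adjoint (F z.1 - F z.2) ξ‖ ^ 2 / 2)) (μ.prod μ) := by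
    refine .of_bound ((hadj.norm.pow_const 2).neg.div_const 2).exp.aestronglyMeasurable 1
      (.of_forall fun z => ?_)
    rw [Real.norm_eq_abs, Real.abs_exp, Real.exp_le_one_iff]
    exact div_nonpos_of_nonpos_of_nonneg (neg_nonpos.2 (sq_nonneg _)) zero_le_two
  rw [← ofReal_integral_eq_lintegral_ofReal hint_exp (.of_forall fun z => (Real.exp_pos _).le),
    ← integral_sq_norm_charFun_map_clm_apply hF,
    ofReal_integral_eq_lintegral_ofReal hint_char (.of_forall fun a => by positivity)]
  refine lintegral_congr fun a => ?_
  rw [ENNReal.ofReal_pow (norm_nonneg _), ofReal_norm]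

theorem ae_integrable_charFun_map_clm_apply (hF : Measurable F) (μ : Measure X) [IsFiniteMeasure μ]
    {s : ℝ} (hs : Module.finrank ℝ E < s)
    (hfin : ∫⁻ ξ, meanSqCharFun μ F ξ ∂sobolevMeasure E s < ⊤) :
    ∀ᵐ a, Integrable (charFun (μ.map fun x => F x a)) := by
  have hmeas := measurable_charFun_map_clm_apply hF μ
  have hswap : ∫⁻ a, ∫⁻ ξ, ‖charFun (μ.map fun x => F x a) ξ‖ₑ ^ 2 ∂sobolevMeasure E s
      ∂stdGaussian V < ⊤ := by
    rwa [lintegral_lintegral_swap (hmeas.enorm.pow_const 2).aemeasurable]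
  have hae := ae_lt_top (hmeas.enorm.pow_const 2).lintegral_prod_right' hswap.ne
  filter_upwards [(volume_absolutelyContinuous_stdGaussian V).ae_le hae] with a ha
  exact integrable_of_lintegral_sq_sobolevMeasure_lt_top hs measurable_charFun.aestronglyMeasurable
    ha

end RandomLinearImage

section TransferOperator

open ENNReal

variable {ι X : Type*} [Fintype ι] (r : ι → ℝ≥0∞) (f : ι → X → X)

/-- The weighted transfer operator `G ↦ ∑ i, r i * G ∘ f i` of a finite family of self-maps. -/
def transferOp : Module.End ℝ≥0∞ (X → ℝ≥0∞) where
  toFun G x := ∑ i, r i * G (f i x)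
  map_add' G H := by
    funext x
    simp only [Pi.add_apply, mul_add, Finset.sum_add_distrib]
  map_smul' c G := by
    funext x
    simp only [Pi.smul_apply, smul_eq_mul, RingHom.id_apply, Finset.mul_sum, mul_left_comm]

theorem transferOp_apply (G : X → ℝ≥0∞) (x : X) :
    transferOp r f G x = ∑ i, r i * G (f i x) := rfl

variable {r f}

theorem transferOp_mono : Monotone (transferOp r f) := fun G H hGH x => by
  simp only [transferOp_apply]
  gcongr
  exact hGH _

theorem transferOp_mul_le {h : X → ℝ≥0∞} (hh : ∀ i x, h (f i x) ≤ h x) (G : X → ℝ≥0∞) :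
    transferOp r f (h * G) ≤ h * transferOp r f G := fun x => by
  simp only [transferOp_apply, Pi.mul_apply, Finset.mul_sum, mul_left_comm (r _)]
  gcongr
  exact hh _ _

theorem transferOp_iterate_mul_le {h : X → ℝ≥0∞} (hh : ∀ i x, h (f i x) ≤ h x)
    (G : X → ℝ≥0∞) (n : ℕ) :
    (transferOp r f)^[n] (h * G) ≤ h * (transferOp r f)^[n] G := by
  induction n with
  | zero => rfl
  | succ n ih =>
    simp only [Function.iterate_succ_apply']
    exact (transferOp_mono ih).trans (transferOp_mul_le hh _)

theorem le_sum_transferOp_iterate_add {Φ G : X → ℝ≥0∞} (hΦ : Φ ≤ G + transferOp r f Φ) (n : ℕ) :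
    Φ ≤ ∑ k ∈ Finset.range n, (transferOp r f)^[k] G + (transferOp r f)^[n] Φ := by
  induction n with
  | zero => simp
  | succ n ih =>
    have hstep : (transferOp r f)^[n] Φ
        ≤ (transferOp r f)^[n] G + (transferOp r f)^[n + 1] Φ := by
      have h := (transferOp_mono (r := r) (f := f)).iterate n hΦ
      rwa [iterate_map_add, ← Function.iterate_succ_apply] at h
    rw [Finset.sum_range_succ, add_assoc]
    exact ih.trans (add_le_add_right hstep _)

theorem le_tsum_transferOp_iterate {Φ G h : X → ℝ≥0∞} (hh : ∀ i x, h (f i x) ≤ h x)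
    (hfin : ∀ x, h x ≠ ⊤) (hΦ : Φ ≤ G + transferOp r f Φ) (hΦG : Φ ≤ h * G) (x : X) :
    Φ x ≤ ∑' n, (transferOp r f)^[n] G x := by
  by_cases htop : ∑' n, (transferOp r f)^[n] G x = ⊤
  · exact htop ▸ le_top
  have hlim : Filter.Tendsto (fun n => ∑' k, (transferOp r f)^[k] G x
      + h x * (transferOp r f)^[n] G x) Filter.atTop
      (nhds (∑' k, (transferOp r f)^[k] G x + h x * 0)) :=
    (ENNReal.Tendsto.const_mul (ENNReal.tendsto_atTop_zero_of_tsum_ne_top htop)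
      (.inr (hfin x))).const_add _
  rw [mul_zero, add_zero] at hlim
  refine ge_of_tendsto' hlim fun n => ?_
  calc Φ x ≤ (∑ k ∈ Finset.range n, (transferOp r f)^[k] G) x + (transferOp r f)^[n] Φ x :=
        le_sum_transferOp_iterate_add hΦ n x
    _ ≤ ∑' k, (transferOp r f)^[k] G x + h x * (transferOp r f)^[n] G x := by
        rw [Finset.sum_apply]
        exact add_le_add (ENNReal.sum_le_tsum _)
          ((transferOp_mono.iterate n hΦG).trans (transferOp_iterate_mul_le hh G n) x)

variable [MeasurableSpace X] {ν : Measure X} {b : ι → ℝ≥0∞}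

theorem measurable_transferOp_iterate (hf : ∀ i, Measurable (f i)) {G : X → ℝ≥0∞}
    (hG : Measurable G) (n : ℕ) : Measurable ((transferOp r f)^[n] G) := by
  induction n with
  | zero => exact hG
  | succ n ih =>
    rw [Function.iterate_succ_apply']
    exact Finset.measurable_fun_sum _ fun i _ => (ih.comp (hf i)).const_mul _

theorem lintegral_transferOp_le (hf : ∀ i, Measurable (f i))
    (hb : ∀ i, r i ≠ 0 → ν.map (f i) ≤ b i • ν) {G : X → ℝ≥0∞} (hG : Measurable G) :
    ∫⁻ x, transferOp r f G x ∂ν ≤ (∑ i, r i * b i) * ∫⁻ x, G x ∂ν := by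
  simp only [transferOp_apply]
  have hmeas (i : ι) : Measurable fun x => G (f i x) := hG.comp (hf i)
  rw [lintegral_finsetSum _ fun i _ => (hmeas i).const_mul _, Finset.sum_mul]
  refine Finset.sum_le_sum fun i _ => ?_
  rw [lintegral_const_mul _ (hmeas i), mul_assoc]
  rcases eq_or_ne (r i) 0 with hi | hi
  · simp [hi]
  gcongr
  calc ∫⁻ x, G (f i x) ∂ν = ∫⁻ x, G x ∂ν.map (f i) := (lintegral_map hG (hf i)).symm
    _ ≤ ∫⁻ x, G x ∂(b i • ν) := lintegral_mono' (hb i hi) le_rfl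
    _ = b i * ∫⁻ x, G x ∂ν := lintegral_smul_measure _ _

theorem lintegral_transferOp_iterate_le (hf : ∀ i, Measurable (f i))
    (hb : ∀ i, r i ≠ 0 → ν.map (f i) ≤ b i • ν) {G : X → ℝ≥0∞} (hG : Measurable G) (n : ℕ) :
    ∫⁻ x, (transferOp r f)^[n] G x ∂ν ≤ (∑ i, r i * b i) ^ n * ∫⁻ x, G x ∂ν := by
  induction n with
  | zero => simp
  | succ n ih =>
    simp only [Function.iterate_succ_apply', pow_succ', mul_assoc]
    exact (lintegral_transferOp_le hf hb (measurable_transferOp_iterate hf hG n)).trans (by gcongr)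

theorem lintegral_tsum_transferOp_iterate_lt_top (hf : ∀ i, Measurable (f i))
    (hb : ∀ i, r i ≠ 0 → ν.map (f i) ≤ b i • ν) (hrb : ∑ i, r i * b i < 1)
    {G : X → ℝ≥0∞} (hG : Measurable G) (hGν : ∫⁻ x, G x ∂ν < ⊤) :
    ∫⁻ x, ∑' n, (transferOp r f)^[n] G x ∂ν < ⊤ := by
  rw [lintegral_tsum fun n => (measurable_transferOp_iterate hf hG n).aemeasurable]
  calc ∑' n, ∫⁻ x, (transferOp r f)^[n] G x ∂ν
      ≤ ∑' n, (∑ i, r i * b i) ^ n * ∫⁻ x, G x ∂ν :=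
        ENNReal.tsum_le_tsum (lintegral_transferOp_iterate_le hf hb hG)
    _ = (1 - ∑ i, r i * b i)⁻¹ * ∫⁻ x, G x ∂ν := by
        rw [ENNReal.tsum_mul_right, ENNReal.tsum_geometric]
    _ < ⊤ := ENNReal.mul_lt_top (ENNReal.inv_lt_top.2 (tsub_pos_of_lt hrb)) hGν

end TransferOperator

section CodingOperator

open ContinuousLinearMap

variable {ι : Type*}

/-- The product `L (x 0) * ⋯ * L (x (n - 1))` along the first `n` letters of an infinite word. -/
def prefixProd {M : Type*} [Monoid M] (L : ι → M) (x : ℕ → ι) (n : ℕ) : M :=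
  (List.ofFn fun k : Fin n => L (x k)).prod

theorem prefixProd_zero {M : Type*} [Monoid M] (L : ι → M) (x : ℕ → ι) :
    prefixProd L x 0 = 1 := by
  simp [prefixProd]

theorem prefixProd_succ {M : Type*} [Monoid M] (L : ι → M) (x : ℕ → ι) (n : ℕ) :
    prefixProd L x (n + 1) = L (x 0) * prefixProd L (fun k => x (k + 1)) n := by
  simp [prefixProd, List.ofFn_succ]

theorem continuous_prefixProd [TopologicalSpace ι] {M : Type*} [Monoid M] [TopologicalSpace M]
    [ContinuousMul M] {L : ι → M} (hL : Continuous L) (n : ℕ) :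
    Continuous fun x : ℕ → ι => prefixProd L x n := by
  induction n with
  | zero => simpa only [prefixProd_zero] using continuous_const
  | succ n ih =>
    simp only [prefixProd_succ]
    have hshift : Continuous fun (x : ℕ → ι) k => x (k + 1) :=
      continuous_pi fun k => continuous_apply (k + 1)
    exact (hL.comp (continuous_apply 0)).mul (ih.comp hshift)

variable {E : Type*} [NormedAddCommGroup E]

section Normed

variable [NormedSpace ℝ E] {L : ι → E →L[ℝ] E} {ρ : ℝ}

theorem norm_prefixProd_le (hL : ∀ i, ‖L i‖ ≤ ρ) (x : ℕ → ι) (n : ℕ) :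
    ‖prefixProd L x n‖ ≤ ρ ^ n := by
  induction n generalizing x with
  | zero => simpa only [prefixProd_zero, pow_zero] using! norm_id_le
  | succ n ih =>
    rw [prefixProd_succ, pow_succ']
    exact (norm_mul_le _ _).trans (mul_le_mul (hL _) (ih _) (norm_nonneg _)
      ((norm_nonneg _).trans (hL (x 0))))

/-- The coding map `v ↦ ∑ n, L (x 0) ⋯ L (x (n - 1)) v (x n)` of the word `x`, seen as an operator
in the translation vectors `v`. -/
def codingOperator (L : ι → E →L[ℝ] E) (x : ℕ → ι) : PiLp 2 (fun _ : ι => E) →L[ℝ] E :=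
  ∑' n, (prefixProd L x n).comp (PiLp.proj 2 (fun _ => E) (x n))

theorem norm_prefixProd_comp_proj_le [Fintype ι] (hL : ∀ i, ‖L i‖ ≤ ρ) (x : ℕ → ι) (n : ℕ) :
    ‖(prefixProd L x n).comp (PiLp.proj 2 (𝕜 := ℝ) (fun _ => E) (x n))‖ ≤ ρ ^ n := by
  refine ContinuousLinearMap.opNorm_le_bound _
    (pow_nonneg ((norm_nonneg _).trans (hL (x 0))) n) fun v => ?_
  calc ‖prefixProd L x n (v (x n))‖ ≤ ‖prefixProd L x n‖ * ‖v (x n)‖ := le_opNorm _ _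
    _ ≤ ρ ^ n * ‖v‖ := mul_le_mul (norm_prefixProd_le hL x n) (PiLp.norm_apply_le v _)
        (norm_nonneg _) ((norm_nonneg _).trans (norm_prefixProd_le hL x n))

variable [Finite ι] [CompleteSpace E]

theorem summable_codingOperator (hL : ∀ i, ‖L i‖ ≤ ρ) (hρ : ρ < 1) (x : ℕ → ι) :
    Summable fun n => (prefixProd L x n).comp (PiLp.proj 2 (𝕜 := ℝ) (fun _ => E) (x n)) :=
  have := Fintype.ofFinite ι
  .of_norm_bounded (summable_geometric_of_lt_one ((norm_nonneg _).trans (hL (x 0))) hρ)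
    (norm_prefixProd_comp_proj_le hL x)

theorem codingOperator_apply (hL : ∀ i, ‖L i‖ ≤ ρ) (hρ : ρ < 1) (x : ℕ → ι)
    (v : PiLp 2 fun _ : ι => E) :
    codingOperator L x v = ∑' n, prefixProd L x n (v (x n)) :=
  have := Fintype.ofFinite ι
  (apply ℝ E v).map_tsum (summable_codingOperator hL hρ x)

theorem norm_codingOperator_apply_le (hL : ∀ i, ‖L i‖ ≤ ρ) (hρ : ρ < 1) (x : ℕ → ι)
    {v : PiLp 2 fun _ : ι => E} {M : ℝ} (hv : ∀ i, ‖v i‖ ≤ M) :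
    ‖codingOperator L x v‖ ≤ (1 - ρ)⁻¹ * M := by
  have hρ0 : 0 ≤ ρ := (norm_nonneg _).trans (hL (x 0))
  rw [codingOperator_apply hL hρ]
  refine tsum_of_norm_bounded ((hasSum_geometric_of_lt_one hρ0 hρ).mul_right M) fun n => ?_
  exact (le_opNorm _ _).trans (mul_le_mul (norm_prefixProd_le hL x n) (hv _) (norm_nonneg _)
    (pow_nonneg hρ0 n))

theorem codingOperator_eq_proj_add (hL : ∀ i, ‖L i‖ ≤ ρ) (hρ : ρ < 1) (x : ℕ → ι) :
    codingOperator L x = PiLp.proj 2 (fun _ => E) (x 0)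
      + (L (x 0)).comp (codingOperator L fun n => x (n + 1)) := by
  have := Fintype.ofFinite ι
  have hterm (n : ℕ) :
      (prefixProd L x (n + 1)).comp (PiLp.proj 2 (𝕜 := ℝ) (fun _ => E) (x (n + 1)))
        = compL ℝ _ E E (L (x 0)) ((prefixProd L (fun k => x (k + 1)) n).comp
            (PiLp.proj 2 (fun _ => E) (x (n + 1)))) := by
    rw [prefixProd_succ]
    rfl
  rw [codingOperator, (summable_codingOperator hL hρ x).tsum_eq_zero_add]
  simp only [hterm]
  rw [← ContinuousLinearMap.map_tsum _ (summable_codingOperator hL hρ fun n => x (n + 1)),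
    prefixProd_zero]
  rfl

theorem norm_codingOperator_apply_sub_le (hL : ∀ i, ‖L i‖ ≤ ρ) (hρ : ρ < 1) (x : ℕ → ι)
    {v : PiLp 2 fun _ : ι => E} {M : ℝ} (hv : ∀ i, ‖v i‖ ≤ M) :
    ‖codingOperator L x v - v (x 0)‖ ≤ ρ * ((1 - ρ)⁻¹ * M) := by
  have happly : codingOperator L x v - v (x 0)
      = L (x 0) (codingOperator L (fun n => x (n + 1)) v) := by
    rw [codingOperator_eq_proj_add hL hρ x]
    exact add_sub_cancel_left _ _
  rw [happly]
  exact ((L (x 0)).le_opNorm _).trans (mul_le_mul (hL _) (norm_codingOperator_apply_le hL hρ _ hv)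
    (norm_nonneg _) ((norm_nonneg _).trans (hL (x 0))))

theorem continuous_codingOperator [TopologicalSpace ι] [DiscreteTopology ι]
    (hL : ∀ i, ‖L i‖ ≤ ρ) (hρ : ρ < 1) : Continuous (codingOperator L) := by
  have := Fintype.ofFinite ι
  rcases isEmpty_or_nonempty ι with _ | ⟨⟨i⟩⟩
  · exact continuous_of_const fun x => isEmptyElim (x 0)
  have hproj : Continuous fun i : ι => PiLp.proj 2 (𝕜 := ℝ) (fun _ : ι => E) i :=
    continuous_of_discreteTopology
  exact continuous_tsum
    (fun n => (continuous_prefixProd continuous_of_discreteTopology n).clm_comp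
      (hproj.comp (continuous_apply n)))
    (summable_geometric_of_lt_one ((norm_nonneg _).trans (hL i)) hρ)
    fun n x => norm_prefixProd_comp_proj_le hL x n

theorem isCompact_range_codingOperator_apply (hL : ∀ i, ‖L i‖ ≤ ρ) (hρ : ρ < 1)
    (v : PiLp 2 fun _ : ι => E) : IsCompact (Set.range fun x => codingOperator L x v) := by
  have := Fintype.ofFinite ι
  let _ : TopologicalSpace ι := ⊥
  have : DiscreteTopology ι := ⟨rfl⟩
  exact isCompact_range ((apply ℝ E v).continuous.comp (continuous_codingOperator hL hρ))

end Normed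

section Adjoint

variable [InnerProductSpace ℝ E] [CompleteSpace E] [Fintype ι] {L : ι → E →L[ℝ] E}
  {ρ : ℝ} {x y : ℕ → ι}

theorem adjoint_codingOperator_sub_apply (hL : ∀ i, ‖L i‖ ≤ ρ) (hρ : ρ < 1) (hxy : x 0 = y 0)
    (ξ : E) :
    adjoint (codingOperator L x - codingOperator L y) ξ
      = adjoint (codingOperator L (fun n => x (n + 1)) - codingOperator L fun n => y (n + 1))
          (adjoint (L (x 0)) ξ) := by
  rw [codingOperator_eq_proj_add hL hρ x, codingOperator_eq_proj_add hL hρ y, ← hxy,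
    add_sub_add_left_eq_sub, ← comp_sub, adjoint_comp, comp_apply]

theorem le_norm_adjoint_codingOperator_sub_apply (hL : ∀ i, ‖L i‖ ≤ ρ) (hρ : ρ < 1)
    (hxy : x 0 ≠ y 0) (η : E) :
    (1 - 2 * ρ) / (1 - ρ) * ‖η‖ ≤ ‖adjoint (codingOperator L x - codingOperator L y) η‖ := by
  classical
  rcases (norm_nonneg η).eq_or_lt with hη | hη
  · simp [← hη]
  set F := codingOperator L x - codingOperator L y
  -- Test against the translations `η` at the letter `x 0`, `-η` at `y 0` and `0` elsewhere.
  let v : PiLp 2 fun _ : ι => E := PiLp.single 2 (x 0) η - PiLp.single 2 (y 0) η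
  have hvx : v (x 0) = η := by simp [v, hxy]
  have hvy : v (y 0) = -η := by simp [v, hxy.symm]
  have hv_apply (i : ι) : ‖v i‖ ≤ ‖η‖ := by
    by_cases hix : i = x 0
    · rw [hix, hvx]
    · by_cases hiy : i = y 0
      · rw [hiy, hvy, norm_neg]
      · simp [v, hix, hiy]
  have hv_norm : ‖v‖ ≤ 2 * ‖η‖ := by
    refine (norm_sub_le _ _).trans_eq ?_
    rw [PiLp.norm_single, PiLp.norm_single, two_mul]
  have hFv : ‖F v - (2 : ℝ) • η‖ ≤ 2 * (ρ * ((1 - ρ)⁻¹ * ‖η‖)) := by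
    have hsplit : F v - (2 : ℝ) • η
        = (codingOperator L x v - v (x 0)) - (codingOperator L y v - v (y 0)) := by
      rw [hvx, hvy, sub_apply]
      module
    rw [hsplit, two_mul]
    exact (norm_sub_le _ _).trans (add_le_add (norm_codingOperator_apply_sub_le hL hρ x hv_apply)
      (norm_codingOperator_apply_sub_le hL hρ y hv_apply))
  have hCS : inner ℝ η (F v) ≤ ‖adjoint F η‖ * (2 * ‖η‖) := by
    rw [← adjoint_inner_left]
    exact (real_inner_le_norm _ _).trans (by gcongr)
  have hinner : 2 * ‖η‖ ^ 2 - ‖η‖ * (2 * (ρ * ((1 - ρ)⁻¹ * ‖η‖))) ≤ inner ℝ η (F v) := by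
    have herr := neg_le_of_abs_le ((abs_real_inner_le_norm η (F v - (2 : ℝ) • η)).trans
      (mul_le_mul_of_nonneg_left hFv hη.le))
    rw [inner_sub_right, inner_smul_right, real_inner_self_eq_norm_sq] at herr
    linarith
  refine le_of_mul_le_mul_right ((le_of_eq ?_).trans (hinner.trans hCS)) (mul_pos two_pos hη)
  field_simp [(sub_pos.2 hρ).ne']
  ring

end Adjoint

end CodingOperator

section Bernoulli

open ContinuousLinearMap

variable {ι : Type*}

/-- The infinite word with first letter `i` followed by `x`. -/
def consSeq (i : ι) (x : ℕ → ι) : ℕ → ι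
  | 0 => i
  | n + 1 => x n

section Measure

variable [MeasurableSpace ι]

theorem measurable_consSeq (i : ι) : Measurable (consSeq i) :=
  measurable_pi_lambda _ fun
    | 0 => measurable_const
    | n + 1 => measurable_pi_apply n

theorem measurable_uncurry_consSeq : Measurable fun q : ι × (ℕ → ι) => consSeq q.1 q.2 :=
  measurable_pi_lambda _ fun
    | 0 => measurable_fst
    | n + 1 => (measurable_pi_apply n).comp measurable_snd

variable (P : Measure ι) [IsProbabilityMeasure P]

theorem map_consSeq_prod_infinitePi :
    (P.prod (Measure.infinitePi fun _ : ℕ => P)).map (fun q => consSeq q.1 q.2)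
      = Measure.infinitePi fun _ : ℕ => P := by
  classical
  refine Measure.eq_infinitePi _ fun s t ht => ?_
  let u (n : ℕ) : Set ι := if n ∈ s then t n else Set.univ
  have hu (n : ℕ) : MeasurableSet (u n) := by
    by_cases hn : n ∈ s <;> simp [u, hn, ht n]
  obtain ⟨N, hN⟩ := s.exists_nat_subset_range
  have hst : Set.pi s t = Set.pi (Finset.range (N + 1)) u := by
    ext x
    simp only [Set.mem_pi, Finset.mem_coe]
    grind
  have hpreimage : (fun q : ι × (ℕ → ι) => consSeq q.1 q.2) ⁻¹' Set.pi (Finset.range (N + 1)) u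
      = u 0 ×ˢ Set.pi (Finset.range N) fun n => u (n + 1) := by
    ext q
    simp only [Set.mem_preimage, Set.mem_pi, Finset.coe_range, Set.mem_Iio,
      Nat.forall_lt_succ_left, Set.mem_prod, consSeq]
  have hprod : ∏ n ∈ s, P (t n) = ∏ n ∈ Finset.range (N + 1), P (u n) := by
    refine (Finset.prod_congr rfl fun n hn => by simp only [u, if_pos hn]).trans
      (Finset.prod_subset (hN.trans (Finset.range_mono N.le_succ)) fun n _ hn => ?_)
    simp only [u, if_neg hn, measure_univ]
  rw [hprod, hst, Measure.map_apply measurable_uncurry_consSeq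
    (.pi (Finset.countable_toSet _) fun n _ => hu n), hpreimage, Measure.prod_prod,
    Measure.infinitePi_pi _ fun n _ => hu (n + 1), Finset.prod_range_succ', mul_comm]

variable [MeasurableSingletonClass ι]

theorem lintegral_infinitePi_eq_sum [Fintype ι] {f : (ℕ → ι) → ENNReal} (hf : Measurable f) :
    ∫⁻ x, f x ∂Measure.infinitePi (fun _ => P)
      = ∑ i, P {i} * ∫⁻ x, f (consSeq i x) ∂Measure.infinitePi (fun _ => P) := by
  conv_lhs => rw [← map_consSeq_prod_infinitePi P]
  rw [lintegral_map hf measurable_uncurry_consSeq]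
  refine (lintegral_prod _ (hf.comp measurable_uncurry_consSeq).aemeasurable).trans ?_
  rw [lintegral_fintype]
  simp only [Function.comp_apply, mul_comm (P _)]

theorem sum_measure_singleton_eq_one [Fintype ι] : ∑ i, P {i} = 1 := by
  rw [sum_measure_singleton, Finset.coe_univ, measure_univ]

theorem lintegral_infinitePi_le_add [Finite ι] {f : (ℕ → ι) → ENNReal} (hf : Measurable f) (i : ι)
    {C : ENNReal} (hC : ∀ j x, i ≠ j → f (consSeq j x) ≤ C) :
    ∫⁻ x, f x ∂Measure.infinitePi (fun _ => P)
      ≤ C + P {i} * ∫⁻ x, f (consSeq i x) ∂Measure.infinitePi (fun _ => P) := by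
  classical
  have := Fintype.ofFinite ι
  set μ := Measure.infinitePi fun _ : ℕ => P
  calc ∫⁻ x, f x ∂μ = ∑ j, P {j} * ∫⁻ x, f (consSeq j x) ∂μ := lintegral_infinitePi_eq_sum P hf
    _ ≤ ∑ j, (P {j} * C + if j = i then P {i} * ∫⁻ x, f (consSeq i x) ∂μ else 0) := by
        refine Finset.sum_le_sum fun j _ => ?_
        split_ifs with hj
        · exact hj ▸ le_add_self
        · rw [add_zero]
          gcongr
          exact (lintegral_mono fun x => hC j x (Ne.symm hj)).trans_eq (by simp)
    _ = C + P {i} * ∫⁻ x, f (consSeq i x) ∂μ := by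
        rw [Finset.sum_add_distrib, ← Finset.sum_mul, sum_measure_singleton_eq_one, one_mul,
          Finset.sum_ite_eq' _ _ fun _ => _, if_pos (Finset.mem_univ i)]

theorem lintegral_prod_infinitePi_le [Fintype ι] {k : (ℕ → ι) × (ℕ → ι) → ENNReal}
    (hk : Measurable k) {C : ENNReal} (hC : ∀ i j x y, i ≠ j → k (consSeq i x, consSeq j y) ≤ C) :
    ∫⁻ z, k z ∂(Measure.infinitePi fun _ => P).prod (Measure.infinitePi fun _ => P)
      ≤ C + ∑ i, P {i} ^ 2 * ∫⁻ z, k (consSeq i z.1, consSeq i z.2)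
          ∂(Measure.infinitePi fun _ => P).prod (Measure.infinitePi fun _ => P) := by
  set μ := Measure.infinitePi fun _ : ℕ => P
  have hki (i : ι) : Measurable fun z : (ℕ → ι) × (ℕ → ι) => k (consSeq i z.1, consSeq i z.2) :=
    hk.comp (((measurable_consSeq i).comp measurable_fst).prodMk
      ((measurable_consSeq i).comp measurable_snd))
  have hfiber (i : ι) : ∫⁻ x, ∫⁻ y, k (consSeq i x, y) ∂μ ∂μ
      ≤ C + P {i} * ∫⁻ z, k (consSeq i z.1, consSeq i z.2) ∂μ.prod μ := by
    refine (lintegral_mono fun x => lintegral_infinitePi_le_add P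
      (hk.comp measurable_prodMk_left) i fun j y => hC i j x y).trans_eq ?_
    simp only [Function.comp_apply]
    rw [lintegral_add_left measurable_const, lintegral_const, measure_univ, mul_one,
      lintegral_const_mul _ (hki i).lintegral_prod_right', lintegral_prod _ (hki i).aemeasurable]
  rw [lintegral_prod _ hk.aemeasurable, lintegral_infinitePi_eq_sum P hk.lintegral_prod_right']
  calc ∑ i, P {i} * ∫⁻ x, ∫⁻ y, k (consSeq i x, y) ∂μ ∂μ
      ≤ ∑ i, (P {i} * C + P {i} ^ 2 * ∫⁻ z, k (consSeq i z.1, consSeq i z.2) ∂μ.prod μ) := by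
        refine Finset.sum_le_sum fun i _ => (mul_le_mul_right (hfiber i) _).trans_eq ?_
        ring
    _ = C + ∑ i, P {i} ^ 2 * ∫⁻ z, k (consSeq i z.1, consSeq i z.2) ∂μ.prod μ := by
        rw [Finset.sum_add_distrib, ← Finset.sum_mul, sum_measure_singleton_eq_one, one_mul]

end Measure

variable {E : Type*} [NormedAddCommGroup E] [InnerProductSpace ℝ E] [FiniteDimensional ℝ E]
  [Fintype ι] {L : ι → E →L[ℝ] E} {ρ : ℝ}

theorem measurable_codingOperator [MeasurableSpace ι] [DiscreteMeasurableSpace ι]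
    (hL : ∀ i, ‖L i‖ ≤ ρ) (hρ : ρ < 1) : Measurable (codingOperator L) := by
  let _ : TopologicalSpace ι := ⊥
  have : DiscreteTopology ι := ⟨rfl⟩
  exact (continuous_codingOperator hL hρ).measurable

variable [MeasurableSpace E] [BorelSpace E]

theorem meanSqCharFun_codingOperator_le [MeasurableSpace ι] [DiscreteMeasurableSpace ι]
    (P : Measure ι) [IsProbabilityMeasure P] (hL : ∀ i, ‖L i‖ ≤ ρ) (hρ : ρ < 1 / 2) (ξ : E) :
    meanSqCharFun (Measure.infinitePi fun _ => P) (codingOperator L) ξ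
      ≤ ENNReal.ofReal (Real.exp (-(((1 - 2 * ρ) / (1 - ρ)) ^ 2 / 2) * ‖ξ‖ ^ 2))
        + ∑ i, P {i} ^ 2 * meanSqCharFun (Measure.infinitePi fun _ => P) (codingOperator L)
            (adjoint (L i) ξ) := by
  have hρ1 : ρ < 1 := by linarith
  have hmeas := measurable_codingOperator hL hρ1
  simp only [meanSqCharFun_eq_lintegral hmeas]
  have hshift (i : ι) (z : (ℕ → ι) × (ℕ → ι)) :
      adjoint (codingOperator L z.1 - codingOperator L z.2) (adjoint (L i) ξ)
        = adjoint (codingOperator L (consSeq i z.1) - codingOperator L (consSeq i z.2)) ξ :=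
    (adjoint_codingOperator_sub_apply hL hρ1 (x := consSeq i z.1) (y := consSeq i z.2) rfl ξ).symm
  simp only [hshift]
  refine lintegral_prod_infinitePi_le P ?_ fun i j x y hij => ?_
  · exact (((measurable_adjoint_sub_apply hmeas ξ).norm.pow_const 2).neg.div_const
      2).exp.ennreal_ofReal
  · have hle := le_norm_adjoint_codingOperator_sub_apply hL hρ1 (x := consSeq i x)
      (y := consSeq j y) hij ξ
    have hc : 0 ≤ (1 - 2 * ρ) / (1 - ρ) := div_nonneg (by linarith) (by linarith)
    have hsq := pow_le_pow_left₀ (by positivity) hle 2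
    rw [mul_pow] at hsq
    gcongr
    linarith

theorem lintegral_meanSqCharFun_codingOperator_lt_top [Nontrivial E]
    [MeasurableSpace ι] [DiscreteMeasurableSpace ι] (P : Measure ι) [IsProbabilityMeasure P]
    (hL : ∀ i, ‖L i‖ ≤ ρ) (hρ : ρ < 1 / 2) {s : ℝ} (hs : 0 ≤ s)
    (hunit : ∀ i, P {i} ≠ 0 → IsUnit (L i))
    (hsum : ∑ i, P {i} ^ 2 * ENNReal.ofReal
      (‖Ring.inverse (L i)‖ ^ s * |LinearMap.det (L i : E →ₗ[ℝ] E)|⁻¹) < 1) :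
    ∫⁻ ξ, meanSqCharFun (Measure.infinitePi fun _ => P) (codingOperator L) ξ
      ∂sobolevMeasure E s < ⊤ := by
  set c : ℝ := ((1 - 2 * ρ) / (1 - ρ)) ^ 2 / 2
  have hc : 0 < c := half_pos (pow_pos (div_pos (by linarith) (by linarith)) 2)
  have hL1 (i : ι) : ‖L i‖ ≤ 1 := (hL i).trans (by linarith)
  let G (ξ : E) : ENNReal := ENNReal.ofReal (Real.exp (-c * ‖ξ‖ ^ 2))
  let h (ξ : E) : ENNReal := ENNReal.ofReal (Real.exp (c * ‖ξ‖ ^ 2))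
  have hh (i : ι) (ξ : E) : h (adjoint (L i) ξ) ≤ h ξ := by
    have hnorm : ‖adjoint (L i)‖ ≤ 1 := (LinearIsometryEquiv.norm_map _ _).trans_le (hL1 i)
    have : ‖adjoint (L i) ξ‖ ≤ ‖ξ‖ := by simpa only [one_mul] using le_of_opNorm_le _ hnorm ξ
    simp only [h]
    gcongr
  have hhG : h * G = 1 := by
    funext ξ
    simp only [h, G, Pi.mul_apply, Pi.one_apply]
    rw [← ENNReal.ofReal_mul (Real.exp_pos _).le, ← Real.exp_add, neg_mul, add_neg_cancel,
      Real.exp_zero, ENNReal.ofReal_one]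
  refine (lintegral_mono fun ξ => le_tsum_transferOp_iterate hh (fun _ => ENNReal.ofReal_ne_top)
    (fun ξ => meanSqCharFun_codingOperator_le P hL hρ ξ)
    (hhG ▸ fun ξ => meanSqCharFun_le_one (measurable_codingOperator hL (by linarith)) _ ξ)
    ξ).trans_lt ?_
  exact lintegral_tsum_transferOp_iterate_lt_top (fun i => (adjoint (L i)).measurable)
    (fun i hi => map_adjoint_sobolevMeasure_le hs (hunit i (ne_zero_pow two_ne_zero hi)) (hL1 i))
    hsum (by fun_prop) (lintegral_exp_neg_mul_sq_norm_sobolevMeasure_lt_top hs hc)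

theorem ae_interior_range_codingOperator_nonempty_of_pmf [Nontrivial E] (p : PMF ι)
    (hL : ∀ i, ‖L i‖ ≤ ρ) (hρ : ρ < 1 / 2) {s : ℝ} (hs : Module.finrank ℝ E < s)
    (hunit : ∀ i, p i ≠ 0 → IsUnit (L i))
    (hsum : ∑ i, p i ^ 2 * ENNReal.ofReal
      (‖Ring.inverse (L i)‖ ^ s * |LinearMap.det (L i : E →ₗ[ℝ] E)|⁻¹) < 1) :
    ∀ᵐ v, (interior (Set.range fun x => codingOperator L x v)).Nonempty := by
  have hρ1 : ρ < 1 := by linarith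
  let _ : MeasurableSpace ι := ⊤
  set μ : Measure (ℕ → ι) := Measure.infinitePi fun _ => p.toMeasure
  have hfin : ∫⁻ ξ, meanSqCharFun μ (codingOperator L) ξ ∂sobolevMeasure E s < ⊤ :=
    lintegral_meanSqCharFun_codingOperator_lt_top p.toMeasure hL hρ
      ((Nat.cast_nonneg _).trans hs.le)
      (by simpa only [PMF.toMeasure_apply_singleton _ _ (measurableSet_singleton _)] using hunit)
      (by simpa only [PMF.toMeasure_apply_singleton _ _ (measurableSet_singleton _)] using hsum)
  have hmeas := measurable_codingOperator hL hρ1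
  filter_upwards [ae_integrable_charFun_map_clm_apply hmeas μ hs hfin] with v hv
  have hmeas_apply := (hmeas.apply_continuousLinearMap v).aemeasurable (μ := μ)
  have := Measure.isProbabilityMeasure_map hmeas_apply
  have hK := (isCompact_range_codingOperator_apply hL hρ1 v).isClosed
  refine interior_nonempty_of_integrable_charFun hv hK ?_
  exact (ae_map_iff hmeas_apply hK.measurableSet).2 (.of_forall Set.mem_range_self)

theorem exists_pos_sum_mul_rpow_lt {q β : ι → ℝ} (hβ : ∀ i, q i ≠ 0 → β i ≠ 0) {c : ℝ}
    (hc : ∑ i, q i < c) : ∃ ε : ℝ, 0 < ε ∧ ∑ i, q i * β i ^ ε < c := by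
  have hcont : Continuous fun ε : ℝ => ∑ i, q i * β i ^ ε := by
    refine continuous_finsetSum _ fun i _ => ?_
    rcases eq_or_ne (q i) 0 with hi | hi
    · simpa only [hi, zero_mul] using continuous_const
    · exact (Real.continuous_const_rpow (hβ i hi)).const_mul _
  have hlt : ∀ᶠ ε in nhds (0 : ℝ), ∑ i, q i * β i ^ ε < c :=
    hcont.continuousAt.eventually (gt_mem_nhds (by simpa using hc))
  obtain ⟨ε, hε, hε0⟩ :=
    ((hlt.filter_mono nhdsWithin_le_nhds).and (self_mem_nhdsWithin (s := Set.Ioi 0))).exists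
  exact ⟨ε, hε0, hε⟩

theorem exists_pmf_sum_sq_mul_lt_one {n : ℕ} (hn : n ≠ 0) {β D : ι → ℝ} (hβ : ∀ i, 0 ≤ β i)
    (hD : ∀ i, 0 ≤ D i) (hsum : 1 < ∑ i, (β i)⁻¹ ^ n * D i) :
    ∃ (p : PMF ι) (s : ℝ), n < s ∧ (∀ i, p i ≠ 0 → β i ≠ 0) ∧
      ∑ i, p i ^ 2 * ENNReal.ofReal (β i ^ s * (D i)⁻¹) < 1 := by
  -- By Cauchy–Schwarz, the weights `p i` proportional to `q i` minimise the sum for `s = n`.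
  set q : ι → ℝ := fun i => (β i)⁻¹ ^ n * D i with hq
  set S := ∑ i, q i
  have hS : 0 < S := one_pos.trans hsum
  have hq0 (i : ι) : 0 ≤ q i := mul_nonneg (pow_nonneg (inv_nonneg.2 (hβ i)) n) (hD i)
  have hqβ (i : ι) (hi : q i ≠ 0) : β i ≠ 0 := fun h => hi <| by simp [hq, h, hn]
  have hqD (i : ι) (hi : q i ≠ 0) : D i ≠ 0 := fun h => hi <| by simp [hq, h]
  obtain ⟨ε, hε, hεS⟩ := exists_pos_sum_mul_rpow_lt hqβ (lt_self_pow₀ hsum one_lt_two)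
  have hmass : ∑ i, ENNReal.ofReal (q i / S) = 1 := by
    rw [← ENNReal.ofReal_sum_of_nonneg fun i _ => div_nonneg (hq0 i) hS.le, ← Finset.sum_div,
      div_self hS.ne', ENNReal.ofReal_one]
  refine ⟨PMF.ofFintype _ hmass, n + ε, lt_add_of_pos_right _ hε,
    fun i hi => hqβ i fun h => hi (by simp [h]), ?_⟩
  have hterm (i : ι) : ENNReal.ofReal (q i / S) ^ 2 * ENNReal.ofReal (β i ^ (n + ε) * (D i)⁻¹)
      = ENNReal.ofReal (q i * β i ^ ε / S ^ 2) := by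
    have hqS : 0 ≤ q i / S := div_nonneg (hq0 i) hS.le
    rw [← ENNReal.ofReal_pow hqS, ← ENNReal.ofReal_mul (pow_nonneg hqS 2)]
    congr 1
    rcases eq_or_ne (q i) 0 with hi | hi
    · simp [hi]
    have hβi : 0 < β i := (hβ i).lt_of_ne' (hqβ i hi)
    have hDi := hqD i hi
    rw [Real.rpow_add hβi, Real.rpow_natCast]
    simp only [hq, inv_pow]
    field_simp
  simp only [PMF.ofFintype_apply, hterm]
  rw [← ENNReal.ofReal_sum_of_nonneg fun i _ =>
      div_nonneg (mul_nonneg (hq0 i) (Real.rpow_nonneg (hβ i) ε)) (sq_nonneg S),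
    ← Finset.sum_div, ENNReal.ofReal_lt_one, div_lt_one (by positivity)]
  exact hεS

theorem ae_interior_range_codingOperator_nonempty (hL : ∀ i, ‖L i‖ ≤ ρ) (hρ : ρ < 1 / 2)
    (hsum : 1 < ∑ i, ‖Ring.inverse (L i)‖⁻¹ ^ Module.finrank ℝ E
      * |LinearMap.det (L i : E →ₗ[ℝ] E)|) :
    ∀ᵐ v, (interior (Set.range fun x => codingOperator L x v)).Nonempty := by
  rcases subsingleton_or_nontrivial E with _ | _
  · obtain ⟨i, -, -⟩ := Finset.exists_ne_zero_of_sum_ne_zero (one_pos.trans hsum).ne'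
    refine .of_forall fun v => ?_
    rw [(Set.range_nonempty_iff_nonempty.2 ⟨fun _ => i⟩).eq_univ, interior_univ]
    exact Set.univ_nonempty
  obtain ⟨p, s, hs, hp, hps⟩ := exists_pmf_sum_sq_mul_lt_one Module.finrank_pos.ne'
    (fun i => norm_nonneg _) (fun i => abs_nonneg _) hsum
  refine ae_interior_range_codingOperator_nonempty_of_pmf p hL hρ hs (fun i hi => ?_) hps
  by_contra hunit
  exact hp i hi (by rw [Ring.inverse_non_unit _ hunit, norm_zero])

end Bernoulli

section EuclideanMatrix

theorem ae_comp_toLp {ι E : Type*} [Fintype ι] [NormedAddCommGroup E] [InnerProductSpace ℝ E]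
    [FiniteDimensional ℝ E] [MeasurableSpace E] [BorelSpace E] {Q : PiLp 2 (fun _ : ι => E) → Prop}
    (hQ : ∀ᵐ v, Q v) : ∀ᵐ a : ι → E, Q (WithLp.toLp 2 a) := by
  let e := (PiLp.continuousLinearEquiv 2 ℝ fun _ : ι => E).symm
  have := e.isAddHaarMeasure_map (volume : Measure (ι → E))
  exact ae_of_ae_map e.continuous.measurable.aemeasurable
    ((Measure.absolutelyContinuous_isAddHaarMeasure (volume.map e) volume).ae_le hQ)

theorem toEuclideanCLM_nonsing_inv (A : Matrix (Fin d) (Fin d) ℝ) :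
    Matrix.toEuclideanCLM (𝕜 := ℝ) A⁻¹ = Ring.inverse (Matrix.toEuclideanCLM (𝕜 := ℝ) A) := by
  rw [Matrix.nonsing_inv_eq_ringInverse]
  by_cases hA : IsUnit A
  · obtain ⟨u, rfl⟩ := hA
    rw [Ring.inverse_unit]
    exact (Ring.inverse_unit (Units.mapEquiv (Matrix.toEuclideanCLM (𝕜 := ℝ)).toMulEquiv u)).symm
  · rw [Ring.inverse_non_unit _ hA, map_zero, Ring.inverse_non_unit _ (by simpa using hA)]

theorem det_toEuclideanCLM (A : Matrix (Fin d) (Fin d) ℝ) :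
    LinearMap.det (Matrix.toEuclideanCLM (𝕜 := ℝ) A : EuclideanSpace ℝ (Fin d) →ₗ[ℝ] _)
      = A.det := by
  rw [Matrix.coe_toEuclideanCLM_eq_toEuclideanLin, LinearMap.det_toLpLin]

theorem codingMap_eq_codingOperator {T : Fin m → Matrix (Fin d) (Fin d) ℝ} {ρ : ℝ}
    (hT : ∀ i, opNorm (T i) ≤ ρ) (hρ : ρ < 1) (a : Fin m → EuclideanSpace ℝ (Fin d))
    (x : ℕ → Fin m) :
    codingMap T a x
      = codingOperator (fun i => Matrix.toEuclideanCLM (𝕜 := ℝ) (T i)) x (WithLp.toLp 2 a) := by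
  rw [codingOperator_apply hT hρ]
  refine tsum_congr fun n => ?_
  simp only [wordProd, prefixProd, map_list_prod, List.map_ofFn, Function.comp_def]

end EuclideanMatrix

theorem typical_selfAffine_nonempty_interior_of_sum_alpha_det_gt_one_general
    (T : Fin m → Matrix (Fin d) (Fin d) ℝ)
    (hnorm : ∀ i, opNorm (T i) < 1 / 2)
    (hsum : 1 < ∑ i : Fin m, alphaMin (T i) ^ d * |(T i).det|) :
    ∀ᵐ a ∂(volume : Measure (Fin m → EuclideanSpace ℝ (Fin d))),
      (interior (attractor T a)).Nonempty := by
  obtain ⟨i, -, -⟩ := Finset.exists_ne_zero_of_sum_ne_zero (one_pos.trans hsum).ne'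
  have : Nonempty (Fin m) := ⟨i⟩
  obtain ⟨j, hj⟩ := Finite.exists_max fun i => opNorm (T i)
  have hattractor (a) : attractor T a = Set.range fun x => codingOperator
      (fun i => Matrix.toEuclideanCLM (𝕜 := ℝ) (T i)) x (WithLp.toLp 2 a) :=
    congrArg Set.range <| funext <|
      codingMap_eq_codingOperator hj ((hnorm j).trans one_half_lt_one) a
  simp only [hattractor]
  refine ae_comp_toLp (ae_interior_range_codingOperator_nonempty hj (hnorm j) ?_)
  simpa only [alphaMin, opNorm, toEuclideanCLM_nonsing_inv, det_toEuclideanCLM,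
    finrank_euclideanSpace_fin] using hsum

/-- **Corollary 1.2(i).** If `‖T_i‖ < 1/2` for all `i` and
`∑_i α_d(T_i)^d |det T_i| > 1`, then for Lebesgue-a.e. `a ∈ ℝ^{md}` the self-affine set
`K^a` has non-empty interior. -/
theorem typical_selfAffine_nonempty_interior_of_sum_alpha_det_gt_one
    (T : Fin m → Matrix (Fin d) (Fin d) ℝ)
    (hinv : ∀ i, IsUnit (T i).det)
    (hnorm : ∀ i, opNorm (T i) < 1 / 2)
    (hsum : 1 < ∑ i : Fin m, alphaMin (T i) ^ d * |(T i).det|) :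
    ∀ᵐ a ∂(volume : Measure (Fin m → EuclideanSpace ℝ (Fin d))),
      (interior (attractor T a)).Nonempty :=
  typical_selfAffine_nonempty_interior_of_sum_alpha_det_gt_one_general T hnorm hsum

end SelfAffine
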